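/- arXiv:2204.08140 — 4 statements merged into one kernel-verified Lean document; each statement's English description precedes it below -/
import Mathlib

section
/- Let t, W ≥ 2, K ≥ 1 be integers and let real numbers φ_t, φ_{t',k}, δ̄_t, δ̲_t, δ̄_{t',k}, δ̲_{t',k} (for t' ∈ {t+1,…,t+W−1}, k ∈ {1,…,K}) satisfy the stationarity equations: −δ̲_t + δ̄_t + φ_t − Σ_{k=1}^K φ_{t+1,k} = 0; −δ̲_{t',k} + δ̄_{t',k} + φ_{t',k} − φ_{t'+1,k} = 0 for all k and all t' with t+1 ≤ t' ≤ t+W−2; and −δ̲_{t+W−1,k} + δ̄_{t+W−1,k} + φ_{t+W−1,k} = 0 for all k. Suppose moreover the multipliers are nonnegative and satisfy complementary slackness against SOC limits E̲ ≤ E ≤ Ē: δ̄_t(Ē − E_t) = 0, δ̲_t(E_t − E̲) = 0, δ̄_{t',k}(Ē − E_{t',k}) = 0, δ̲_{t',k}(E_{t',k} − E̲) = 0, and the SOC is strictly interior, E̲ < E_t < Ē and E̲ < E_{t',k} < Ē, for all t' ∈ {t+1,…,t+W−1} and all k. Then φ_t = 0. -/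
/-!
Telescoping the stationarity equations backwards from the end of the window expresses the SOC price
as the sum of all net SOC-limit multipliers `δl - δu` in the window. Complementary slackness makes
each of them vanish when no SOC limit is binding.
-/

section Stationarity

variable {A : Type*} [AddCommGroup A]

lemma advisory_price_eq_sum {m n : ℕ} (hmn : m ≤ n) {φ δu δl : ℕ → A}
    (hstep : ∀ i, m ≤ i → i < n → -δl i + δu i + φ i - φ (i + 1) = 0)
    (hlast : -δl n + δu n + φ n = 0) :
    φ m = ∑ i ∈ Finset.Icc m n, (δl i - δu i) := by
  have hdrop : ∀ i ∈ Finset.Ico m n, φ i - φ (i + 1) = δl i - δu i := fun i hi => by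
    obtain ⟨hmi, hin⟩ := Finset.mem_Ico.mp hi
    rw [← sub_eq_zero, ← hstep i hmi hin]
    abel
  have hend : φ n = δl n - δu n := by
    rw [← sub_eq_zero, ← hlast]
    abel
  have htelescope : φ m - φ n = ∑ i ∈ Finset.Ico m n, (φ i - φ (i + 1)) := by
    rw [← neg_sub, ← Finset.sum_Ico_sub φ hmn, ← Finset.sum_neg_distrib]
    simp only [neg_sub]
  calc φ m = (φ m - φ n) + φ n := (sub_add_cancel _ _).symm
    _ = ∑ i ∈ Finset.Ico m n, (φ i - φ (i + 1)) + φ n := by rw [htelescope]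
    _ = ∑ i ∈ Finset.Ico m n, (δl i - δu i) + (δl n - δu n) := by
      rw [Finset.sum_congr rfl hdrop, hend]
    _ = ∑ i ∈ Finset.Icc m n, (δl i - δu i) := Finset.sum_Ico_add_eq_sum_Icc hmn

lemma soc_price_eq_sum {ι : Type*} {s : Finset ι} {t T : ℕ} (hT : t + 1 ≤ T)
    {φt δut δlt : A} {φ δu δl : ℕ → ι → A}
    (hbind : -δlt + δut + φt - ∑ k ∈ s, φ (t + 1) k = 0)
    (hstep : ∀ k ∈ s, ∀ i, t + 1 ≤ i → i < T → -δl i k + δu i k + φ i k - φ (i + 1) k = 0)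
    (hlast : ∀ k ∈ s, -δl T k + δu T k + φ T k = 0) :
    φt = (δlt - δut) + ∑ k ∈ s, ∑ i ∈ Finset.Icc (t + 1) T, (δl i k - δu i k) := by
  have hadv : ∑ k ∈ s, φ (t + 1) k = ∑ k ∈ s, ∑ i ∈ Finset.Icc (t + 1) T, (δl i k - δu i k) :=
    Finset.sum_congr rfl fun k hk =>
      advisory_price_eq_sum (φ := (φ · k)) hT (hstep k hk) (hlast k hk)
  rw [← hadv, ← sub_eq_zero, ← hbind]
  abel

end Stationarity

section Slackness

variable {R : Type*} [Ring R] [NoZeroDivisors R]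

lemma net_multiplier_eq_zero {δu δl lo hi E : R} (hu : δu * (hi - E) = 0)
    (hl : δl * (E - lo) = 0) (hE : E ≠ lo ∧ E ≠ hi) : δl - δu = 0 := by
  have hδu : δu = 0 := (mul_eq_zero.mp hu).resolve_right (sub_ne_zero.mpr hE.2.symm)
  have hδl : δl = 0 := (mul_eq_zero.mp hl).resolve_right (sub_ne_zero.mpr hE.1)
  rw [hδu, hδl, sub_zero]

theorem soc_price_zero_of_interior_general {ι : Type*} {s : Finset ι} {t T : ℕ} (hT : t + 1 ≤ T)
    {φt δut δlt Elo Ehi Et : R} {φ δu δl Ev : ℕ → ι → R}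
    (hbind : -δlt + δut + φt - ∑ k ∈ s, φ (t + 1) k = 0)
    (hstep : ∀ k ∈ s, ∀ i, t + 1 ≤ i → i < T → -δl i k + δu i k + φ i k - φ (i + 1) k = 0)
    (hlast : ∀ k ∈ s, -δl T k + δu T k + φ T k = 0)
    (hcsut : δut * (Ehi - Et) = 0) (hcslt : δlt * (Et - Elo) = 0)
    (hcsu : ∀ i, t + 1 ≤ i → i ≤ T → ∀ k ∈ s, δu i k * (Ehi - Ev i k) = 0)
    (hcsl : ∀ i, t + 1 ≤ i → i ≤ T → ∀ k ∈ s, δl i k * (Ev i k - Elo) = 0)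
    (hEt : Et ≠ Elo ∧ Et ≠ Ehi)
    (hEv : ∀ i, t + 1 ≤ i → i ≤ T → ∀ k ∈ s, Ev i k ≠ Elo ∧ Ev i k ≠ Ehi) :
    φt = 0 := by
  have hnet : ∀ k ∈ s, ∀ i ∈ Finset.Icc (t + 1) T, δl i k - δu i k = 0 := fun k hk i hi => by
    obtain ⟨hti, hiT⟩ := Finset.mem_Icc.mp hi
    exact net_multiplier_eq_zero (hcsu i hti hiT k hk) (hcsl i hti hiT k hk) (hEv i hti hiT k hk)
  rw [soc_price_eq_sum hT hbind hstep hlast, net_multiplier_eq_zero hcsut hcslt hEt, zero_add]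
  exact Finset.sum_eq_zero fun k hk => Finset.sum_eq_zero (hnet k hk)

end Slackness

/-!
STATEMENT 1 (observation following Lemma 1 of the paper).

Same KKT stationarity conditions as in Lemma 1 for the SOC duals of the
scenario-based stochastic rolling-window dispatch (window size `W`, `K`
scenarios).  In addition the SOC-limit multipliers `δu, δl` (and `δut, δlt`
at the binding interval) are nonnegative and satisfy complementary slackness
against the SOC limits `Elo ≤ E ≤ Ehi`, and the SOC values `Et`, `Ev t' k`
are strictly interior.  Then the SOC price `φt` vanishes.
-/
theorem soc_price_zero_of_interior
    (t W K : ℕ) (hW : 2 ≤ W) (hK : 1 ≤ K)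
    (φt : ℝ) (φ : ℕ → ℕ → ℝ)
    (δut δlt : ℝ) (δu δl : ℕ → ℕ → ℝ)
    (Elo Ehi : ℝ) (Et : ℝ) (Ev : ℕ → ℕ → ℝ)
    -- stationarity conditions (as in Lemma 1)
    (h1 : -δlt + δut + φt - ∑ k ∈ Finset.Icc 1 K, φ (t + 1) k = 0)
    (h2 : ∀ k ∈ Finset.Icc 1 K, ∀ t', t + 1 ≤ t' → t' ≤ t + W - 2 →
      -δl t' k + δu t' k + φ t' k - φ (t' + 1) k = 0)
    (h3 : ∀ k ∈ Finset.Icc 1 K,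
      -δl (t + W - 1) k + δu (t + W - 1) k + φ (t + W - 1) k = 0)
    -- nonnegativity of the SOC-limit multipliers
    (hδut : 0 ≤ δut) (hδlt : 0 ≤ δlt)
    (hδu : ∀ t', t + 1 ≤ t' → t' ≤ t + W - 1 → ∀ k ∈ Finset.Icc 1 K, 0 ≤ δu t' k)
    (hδl : ∀ t', t + 1 ≤ t' → t' ≤ t + W - 1 → ∀ k ∈ Finset.Icc 1 K, 0 ≤ δl t' k)
    -- complementary slackness against the SOC limits
    (hcsut : δut * (Ehi - Et) = 0)
    (hcslt : δlt * (Et - Elo) = 0)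
    (hcsu : ∀ t', t + 1 ≤ t' → t' ≤ t + W - 1 → ∀ k ∈ Finset.Icc 1 K,
      δu t' k * (Ehi - Ev t' k) = 0)
    (hcsl : ∀ t', t + 1 ≤ t' → t' ≤ t + W - 1 → ∀ k ∈ Finset.Icc 1 K,
      δl t' k * (Ev t' k - Elo) = 0)
    -- strict interiority of the SOC in the look-ahead window
    (hintt : Elo < Et ∧ Et < Ehi)
    (hint : ∀ t', t + 1 ≤ t' → t' ≤ t + W - 1 → ∀ k ∈ Finset.Icc 1 K,
      Elo < Ev t' k ∧ Ev t' k < Ehi) :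
    φt = 0 := by
  exact soc_price_zero_of_interior_general (T := t + W - 1) (by omega) h1
    (fun k hk i hti hiT => h2 k hk i hti (by omega)) h3 hcsut hcslt hcsu hcsl
    ⟨hintt.1.ne', hintt.2.ne⟩
    fun i hti hiT k hk => ⟨(hint i hti hiT k hk).1.ne', (hint i hti hiT k hk).2.ne⟩
end

section
/- Consider the individual storage profit-maximization problem over the feasible set S with price vector π ∈ ℝ^T. Suppose (g^D, g^C, E) ∈ S maximizes profit(π; ·) over S, and at some interval t the following marginality conditions hold: 0 < g^D_t < ḡ^D; the discharge ramp constraints between intervals t−1 and t and between t and t+1 are strictly nonbinding at (g^D, g^C, E) (for t = T only the constraint between t−1 and t is required); and E̲ < E_{t'} < Ē for all t' ≥ t. Then π_t = (f^D_t)'(g^D_t). Analogously, if 0 < g^C_t < ḡ^C with strictly nonbinding charging ramp constraints around t and E̲ < E_{t'} < Ē for all t' ≥ t, then π_t = (f^C_t)'(g^C_t). -/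
/-- Parameters of a (generalized) energy storage resource (ESR):
discharge/charge efficiencies, initial SOC and initial charge/discharge
levels, ramp limits, SOC limits and capacity limits. -/
structure ESRParams where
  xiD : ℝ
  xiC : ℝ
  hxiD : xiD ∈ Set.Ioc (0 : ℝ) 1
  hxiC : xiC ∈ Set.Ioc (0 : ℝ) 1
  E0 : ℝ
  pD0 : ℝ
  pC0 : ℝ
  rDup : ℝ
  rDdn : ℝ
  rCup : ℝ
  rCdn : ℝ
  hrDup : 0 ≤ rDup
  hrDdn : 0 ≤ rDdn
  hrCup : 0 ≤ rCup
  hrCdn : 0 ≤ rCdn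
  Elo : ℝ
  Ehi : ℝ
  hElim : Elo ≤ Ehi
  gDmax : ℝ
  gCmax : ℝ
  hgD : 0 < gDmax
  hgC : 0 < gCmax

/-- The individual feasible set `S` of the ESR over horizon `T`
(intervals `t = 1, …, T`; index `0` carries the initial conditions):
SOC transition, ramp constraints, SOC limits and capacity limits. -/
def Feasible (T : ℕ) (P : ESRParams) (pD pC e : ℕ → ℝ) : Prop :=
  pD 0 = P.pD0 ∧ pC 0 = P.pC0 ∧ e 0 = P.E0 ∧
  ∀ t ∈ Finset.Icc 1 T,
    e t - e (t - 1) = P.xiC * pC t - pD t / P.xiD ∧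
    -P.rDdn ≤ pD t - pD (t - 1) ∧ pD t - pD (t - 1) ≤ P.rDup ∧
    -P.rCdn ≤ pC t - pC (t - 1) ∧ pC t - pC (t - 1) ≤ P.rCup ∧
    P.Elo ≤ e t ∧ e t ≤ P.Ehi ∧
    0 ≤ pD t ∧ pD t ≤ P.gDmax ∧
    0 ≤ pC t ∧ pC t ≤ P.gCmax

/-- Profit of the ESR under (possibly distinct) discharge/charge price
sequences `piD, piC`, with bid curves `fD` (discharge cost) and `fC`
(charging benefit).  For a uniform price `π`, take `piD = piC = π`. -/
def profit (T : ℕ) (piD piC : ℕ → ℝ) (fD fC : ℕ → ℝ → ℝ)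
    (pD pC : ℕ → ℝ) : ℝ :=
  ∑ t ∈ Finset.Icc 1 T,
    (piD t * pD t - piC t * pC t - fD t (pD t) + fC t (pC t))

/-- The ESR is "marginal" in discharging at interval `t`: discharge strictly
within capacity, discharge ramp constraints strictly nonbinding between
`t-1` and `t` and between `t` and `t+1` (the latter only required when
`t < T`), and SOC strictly interior from `t` to the end of the horizon. -/
def MarginalD (T : ℕ) (P : ESRParams) (gD e : ℕ → ℝ) (t : ℕ) : Prop :=
  0 < gD t ∧ gD t < P.gDmax ∧
  (-P.rDdn < gD t - gD (t - 1) ∧ gD t - gD (t - 1) < P.rDup) ∧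
  (t < T → -P.rDdn < gD (t + 1) - gD t ∧ gD (t + 1) - gD t < P.rDup) ∧
  (∀ t', t ≤ t' → t' ≤ T → P.Elo < e t' ∧ e t' < P.Ehi)

/-- The ESR is "marginal" in charging at interval `t`. -/
def MarginalC (T : ℕ) (P : ESRParams) (gC e : ℕ → ℝ) (t : ℕ) : Prop :=
  0 < gC t ∧ gC t < P.gCmax ∧
  (-P.rCdn < gC t - gC (t - 1) ∧ gC t - gC (t - 1) < P.rCup) ∧
  (t < T → -P.rCdn < gC (t + 1) - gC t ∧ gC (t + 1) - gC t < P.rCup) ∧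
  (∀ t', t ≤ t' → t' ≤ T → P.Elo < e t' ∧ e t' < P.Ehi)

/-!
Changing the power in a single interval `t`, and the state of charge by the corresponding constant
from `t` onwards, respects the state-of-charge dynamics. At a marginal interval every inequality
which such a change can affect is strict, so all small changes of either sign are feasible.
Hence a local maximum of the profit is stationary under them; since they alter only one term of the
profit, stationarity says that the price equals the derivative of the bid curve.
-/

open Filter Function Topology

section FiniteConstraints

variable {ι : Type*}

theorem eventually_forall_mem_Icc {X α : Type*} [TopologicalSpace X] [TopologicalSpace α]
    [LinearOrder α] [OrderTopology α] {I : Finset ι} {F : ι → X → α} {a b : α} {x : X}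
    (hF : ∀ i ∈ I, ContinuousAt (F i) x)
    (h : ∀ i ∈ I, F i x ∈ Set.Ioo a b ∨ ∀ y, F i y ∈ Set.Icc a b) :
    ∀ᶠ y in 𝓝 x, ∀ i ∈ I, F i y ∈ Set.Icc a b := by
  refine (eventually_all_finset I).2 fun i hi => ?_
  rcases h i hi with hIoo | hIcc
  · exact (hF i hi).eventually_mem (Icc_mem_nhds hIoo.1 hIoo.2)
  · exact Eventually.of_forall hIcc

theorem hasDerivAt_sum_update [DecidableEq ι] {𝕜 F : Type*} [NontriviallyNormedField 𝕜]
    [NormedAddCommGroup F] [NormedSpace 𝕜 F] {I : Finset ι} (f : ι → 𝕜 → F) (p : ι → 𝕜) {i : ι}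
    (hi : i ∈ I) {f' : F} {x : 𝕜} (hf : HasDerivAt (f i) f' x) :
    HasDerivAt (fun y => ∑ j ∈ I, f j (update p i y j)) f' x := by
  simp only [apply_update f, Finset.sum_update_of_mem hi]
  exact hf.add_const _

end FiniteConstraints

/-- A discharging or charging schedule with initial level `p₀` that obeys the ramp limits
`rdn`, `rup` and the capacity limit `pmax` in the intervals `1, …, T`. -/
structure IsPowerSchedule (T : ℕ) (p₀ rdn rup pmax : ℝ) (p : ℕ → ℝ) : Prop where
  initial : p 0 = p₀
  ramp : ∀ s ∈ Finset.Icc 1 T, p s - p (s - 1) ∈ Set.Icc (-rdn) rup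
  capacity : ∀ s ∈ Finset.Icc 1 T, p s ∈ Set.Icc 0 pmax

theorem IsPowerSchedule.eventually_update {T t : ℕ} {p₀ rdn rup pmax : ℝ} {p : ℕ → ℝ}
    (hp : IsPowerSchedule T p₀ rdn rup pmax p) (ht : 1 ≤ t)
    (hcap : p t ∈ Set.Ioo 0 pmax) (hramp : p t - p (t - 1) ∈ Set.Ioo (-rdn) rup)
    (hramp_succ : t < T → p (t + 1) - p t ∈ Set.Ioo (-rdn) rup) :
    ∀ᶠ y in 𝓝 (p t), IsPowerSchedule T p₀ rdn rup pmax (update p t y) := by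
  have hcont (s : ℕ) : Continuous fun y => update p t y s := by fun_prop
  have hramp_update : ∀ᶠ y in 𝓝 (p t), ∀ s ∈ Finset.Icc 1 T,
      update p t y s - update p t y (s - 1) ∈ Set.Icc (-rdn) rup := by
    refine eventually_forall_mem_Icc
      (fun s _ => ((hcont s).sub (hcont (s - 1))).continuousAt) fun s hs => ?_
    simp only [update_eq_self]
    rcases eq_or_ne s t with rfl | hst
    · exact .inl hramp
    rcases eq_or_ne (s - 1) t with rfl | hst'
    · obtain ⟨hs1, hsT⟩ := Finset.mem_Icc.1 hs
      simpa only [Nat.sub_add_cancel hs1] using Or.inl (hramp_succ (by lia))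
    · simpa only [update_of_ne hst, update_of_ne hst'] using .inr fun _ => hp.ramp s hs
  have hcap_update : ∀ᶠ y in 𝓝 (p t), ∀ s ∈ Finset.Icc 1 T, update p t y s ∈ Set.Icc 0 pmax := by
    refine eventually_forall_mem_Icc (fun s _ => (hcont s).continuousAt) fun s hs => ?_
    simp only [update_eq_self]
    rcases eq_or_ne s t with rfl | hst
    · exact .inl hcap
    · simpa only [update_of_ne hst] using .inr fun _ => hp.capacity s hs
  filter_upwards [hramp_update, hcap_update] with y hy_ramp hy_cap
  exact ⟨by rw [update_of_ne (by lia), hp.initial], hy_ramp, hy_cap⟩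

/-- The trajectory `e` with its values from interval `t` onwards raised by `c`: the effect on the
state of charge of storing an additional amount `c` in interval `t`. -/
def shiftFrom {M : Type*} [Add M] (t : ℕ) (c : M) (e : ℕ → M) : ℕ → M :=
  fun s => if t ≤ s then e s + c else e s

section ShiftFrom

variable {M : Type*} {t : ℕ}

@[simp]
theorem shiftFrom_zero_right [AddZeroClass M] (e : ℕ → M) : shiftFrom t 0 e = e := by
  funext s
  simp only [shiftFrom, add_zero, ite_self]

theorem continuous_shiftFrom [TopologicalSpace M] [Add M] [ContinuousAdd M] (e : ℕ → M) :
    Continuous fun c => shiftFrom t c e := by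
  refine continuous_pi fun s => ?_
  unfold shiftFrom
  split_ifs <;> fun_prop

theorem shiftFrom_sub_shiftFrom_pred [AddCommGroup M] (ht : 1 ≤ t) (c : M) (e : ℕ → M) (s : ℕ) :
    shiftFrom t c e s - shiftFrom t c e (s - 1) = e s - e (s - 1) + if s = t then c else 0 := by
  unfold shiftFrom
  split_ifs <;> first | lia | abel

theorem eventually_shiftFrom_mem_Icc [AddZeroClass M] [LinearOrder M] [TopologicalSpace M]
    [OrderTopology M] [ContinuousAdd M] {I : Finset ℕ} {a b : M} {e : ℕ → M}
    (he : ∀ s ∈ I, e s ∈ Set.Icc a b) (he_from : ∀ s ∈ I, t ≤ s → e s ∈ Set.Ioo a b) :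
    ∀ᶠ c in 𝓝 0, ∀ s ∈ I, shiftFrom t c e s ∈ Set.Icc a b := by
  refine eventually_forall_mem_Icc
    (fun s _ => (continuous_apply s |>.comp (continuous_shiftFrom e)).continuousAt) fun s hs => ?_
  by_cases hts : t ≤ s
  · simpa only [shiftFrom_zero_right] using .inl (he_from s hs hts)
  · simpa only [shiftFrom, if_neg hts] using .inr fun _ => he s hs

end ShiftFrom

section Storage

variable {T t : ℕ} {P : ESRParams} {piD piC gD gC E : ℕ → ℝ} {fD fC : ℕ → ℝ → ℝ}

theorem feasible_iff {pD pC e : ℕ → ℝ} :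
    Feasible T P pD pC e ↔
      IsPowerSchedule T P.pD0 P.rDdn P.rDup P.gDmax pD ∧
      IsPowerSchedule T P.pC0 P.rCdn P.rCup P.gCmax pC ∧
      e 0 = P.E0 ∧
      (∀ s ∈ Finset.Icc 1 T, e s - e (s - 1) = P.xiC * pC s - pD s / P.xiD) ∧
      ∀ s ∈ Finset.Icc 1 T, e s ∈ Set.Icc P.Elo P.Ehi := by
  constructor
  · rintro ⟨hD0, hC0, hE0, h⟩
    choose hsoc hDdn hDup hCdn hCup hElo hEhi hD hDmax hC hCmax using h
    exact ⟨⟨hD0, fun s hs => ⟨hDdn s hs, hDup s hs⟩, fun s hs => ⟨hD s hs, hDmax s hs⟩⟩,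
      ⟨hC0, fun s hs => ⟨hCdn s hs, hCup s hs⟩, fun s hs => ⟨hC s hs, hCmax s hs⟩⟩,
      hE0, hsoc, fun s hs => ⟨hElo s hs, hEhi s hs⟩⟩
  · rintro ⟨hD, hC, hE0, hsoc, hE⟩
    exact ⟨hD.initial, hC.initial, hE0, fun s hs =>
      ⟨hsoc s hs, (hD.ramp s hs).1, (hD.ramp s hs).2, (hC.ramp s hs).1, (hC.ramp s hs).2,
        (hE s hs).1, (hE s hs).2, (hD.capacity s hs).1, (hD.capacity s hs).2,
        (hC.capacity s hs).1, (hC.capacity s hs).2⟩⟩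

theorem Feasible.eventually_update_discharge (h : Feasible T P gD gC E) (ht : 1 ≤ t)
    (hm : MarginalD T P gD E t) :
    ∀ᶠ y in 𝓝 (gD t),
      Feasible T P (update gD t y) gC (shiftFrom t (-((y - gD t) / P.xiD)) E) := by
  obtain ⟨hpos, hlt, hramp, hramp_succ, hE_Ioo⟩ := hm
  obtain ⟨hD, hC, hE0, hsoc, hE⟩ := feasible_iff.1 h
  have hE_from : ∀ s ∈ Finset.Icc 1 T, t ≤ s → E s ∈ Set.Ioo P.Elo P.Ehi :=
    fun s hs hts => hE_Ioo s hts (Finset.mem_Icc.1 hs).2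
  have hshift : Tendsto (fun y => -((y - gD t) / P.xiD)) (𝓝 (gD t)) (𝓝 0) :=
    Continuous.tendsto' (by fun_prop) _ _ (by simp)
  filter_upwards [hD.eventually_update ht ⟨hpos, hlt⟩ hramp hramp_succ,
    hshift.eventually (eventually_shiftFrom_mem_Icc hE hE_from)] with y hyD hyE
  refine feasible_iff.2 ⟨hyD, hC, by rw [shiftFrom, if_neg (by lia), hE0], fun s hs => ?_, hyE⟩
  rw [shiftFrom_sub_shiftFrom_pred ht, hsoc s hs]
  rcases eq_or_ne s t with rfl | hst
  · rw [if_pos rfl, update_self]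
    ring
  · rw [if_neg hst, update_of_ne hst, add_zero]

theorem Feasible.eventually_update_charge (h : Feasible T P gD gC E) (ht : 1 ≤ t)
    (hm : MarginalC T P gC E t) :
    ∀ᶠ y in 𝓝 (gC t),
      Feasible T P gD (update gC t y) (shiftFrom t (P.xiC * (y - gC t)) E) := by
  obtain ⟨hpos, hlt, hramp, hramp_succ, hE_Ioo⟩ := hm
  obtain ⟨hD, hC, hE0, hsoc, hE⟩ := feasible_iff.1 h
  have hE_from : ∀ s ∈ Finset.Icc 1 T, t ≤ s → E s ∈ Set.Ioo P.Elo P.Ehi :=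
    fun s hs hts => hE_Ioo s hts (Finset.mem_Icc.1 hs).2
  have hshift : Tendsto (fun y => P.xiC * (y - gC t)) (𝓝 (gC t)) (𝓝 0) :=
    Continuous.tendsto' (by fun_prop) _ _ (by simp)
  filter_upwards [hC.eventually_update ht ⟨hpos, hlt⟩ hramp hramp_succ,
    hshift.eventually (eventually_shiftFrom_mem_Icc hE hE_from)] with y hyC hyE
  refine feasible_iff.2 ⟨hD, hyC, by rw [shiftFrom, if_neg (by lia), hE0], fun s hs => ?_, hyE⟩
  rw [shiftFrom_sub_shiftFrom_pred ht, hsoc s hs]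
  rcases eq_or_ne s t with rfl | hst
  · rw [if_pos rfl, update_self]
    ring
  · rw [if_neg hst, update_of_ne hst, add_zero]

theorem hasDerivAt_profit_update_discharge (pD pC : ℕ → ℝ) (ht : t ∈ Finset.Icc 1 T) {c x : ℝ}
    (hf : HasDerivAt (fD t) c x) :
    HasDerivAt (fun y => profit T piD piC fD fC (update pD t y) pC) (piD t - c) x :=
  hasDerivAt_sum_update (fun s y => piD s * y - piC s * pC s - fD s y + fC s (pC s)) pD ht
    ((((hasDerivAt_const_mul (piD t)).sub_const _).sub hf).add_const _)

theorem hasDerivAt_profit_update_charge (pD pC : ℕ → ℝ) (ht : t ∈ Finset.Icc 1 T) {c x : ℝ}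
    (hf : HasDerivAt (fC t) c x) :
    HasDerivAt (fun y => profit T piD piC fD fC pD (update pC t y)) (-piC t + c) x :=
  hasDerivAt_sum_update (fun s y => piD s * pD s - piC s * y - fD s (pD s) + fC s y) pC ht
    ((((hasDerivAt_const_mul (piC t)).const_sub _).sub_const _).add hf)

/-- The feasible set `S` as a set of triples `(pD, pC, e)`, with the product topology. -/
def feasibleSet (T : ℕ) (P : ESRParams) : Set ((ℕ → ℝ) × (ℕ → ℝ) × (ℕ → ℝ)) :=
  {x | Feasible T P x.1 x.2.1 x.2.2}

theorem price_eq_of_marginalD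
    (hfeas : Feasible T P gD gC E)
    (hopt : IsLocalMaxOn (fun x => profit T piD piC fD fC x.1 x.2.1) (feasibleSet T P) (gD, gC, E))
    (ht : t ∈ Finset.Icc 1 T) (hm : MarginalD T P gD E t) {c : ℝ}
    (hf : HasDerivAt (fD t) c (gD t)) : piD t = c := by
  have hshift : Continuous fun y => shiftFrom t (-((y - gD t) / P.xiD)) E :=
    (continuous_shiftFrom E).comp (by fun_prop)
  have hpath : Tendsto (fun y => (update gD t y, gC, shiftFrom t (-((y - gD t) / P.xiD)) E))
      (𝓝 (gD t)) (𝓝[feasibleSet T P] (gD, gC, E)) :=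
    tendsto_nhdsWithin_iff.2
      ⟨Continuous.tendsto' (by fun_prop) _ _ (by simp),
        hfeas.eventually_update_discharge (Finset.mem_Icc.1 ht).1 hm⟩
  have hmax : IsLocalMax (fun y => profit T piD piC fD fC (update gD t y) gC) (gD t) := by
    simpa only [IsLocalMax, IsMaxFilter, update_eq_self] using hpath.eventually hopt
  exact sub_eq_zero.1 (hmax.hasDerivAt_eq_zero (hasDerivAt_profit_update_discharge gD gC ht hf))

theorem price_eq_of_marginalC
    (hfeas : Feasible T P gD gC E)
    (hopt : IsLocalMaxOn (fun x => profit T piD piC fD fC x.1 x.2.1) (feasibleSet T P) (gD, gC, E))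
    (ht : t ∈ Finset.Icc 1 T) (hm : MarginalC T P gC E t) {c : ℝ}
    (hf : HasDerivAt (fC t) c (gC t)) : piC t = c := by
  have hshift : Continuous fun y => shiftFrom t (P.xiC * (y - gC t)) E :=
    (continuous_shiftFrom E).comp (by fun_prop)
  have hpath : Tendsto (fun y => (gD, update gC t y, shiftFrom t (P.xiC * (y - gC t)) E))
      (𝓝 (gC t)) (𝓝[feasibleSet T P] (gD, gC, E)) :=
    tendsto_nhdsWithin_iff.2
      ⟨Continuous.tendsto' (by fun_prop) _ _ (by simp),
        hfeas.eventually_update_charge (Finset.mem_Icc.1 ht).1 hm⟩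
  have hmax : IsLocalMax (fun y => profit T piD piC fD fC gD (update gC t y)) (gC t) := by
    simpa only [IsLocalMax, IsMaxFilter, update_eq_self] using hpath.eventually hopt
  exact neg_add_eq_zero.1
    (hmax.hasDerivAt_eq_zero (hasDerivAt_profit_update_charge gD gC ht hf))

end Storage

theorem uniform_price_eq_marginal_cost_at_marginal_interval_general
    {T : ℕ} {P : ESRParams} {piD piC : ℕ → ℝ} {fD fC : ℕ → ℝ → ℝ} {gD gC E : ℕ → ℝ}
    (hfeas : Feasible T P gD gC E)
    (hopt : IsLocalMaxOn (fun x => profit T piD piC fD fC x.1 x.2.1) (feasibleSet T P) (gD, gC, E))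
    {t : ℕ} (ht : t ∈ Finset.Icc 1 T) :
    (MarginalD T P gD E t → DifferentiableAt ℝ (fD t) (gD t) → piD t = deriv (fD t) (gD t)) ∧
    (MarginalC T P gC E t → DifferentiableAt ℝ (fC t) (gC t) → piC t = deriv (fC t) (gC t)) :=
  ⟨fun hm hf => price_eq_of_marginalD hfeas hopt ht hm hf.hasDerivAt,
    fun hm hf => price_eq_of_marginalC hfeas hopt ht hm hf.hasDerivAt⟩

/-!
STATEMENT 3.

If `(gD, gC, E) ∈ S` maximizes `profit(π; ·)` over `S` and the ESR is
marginal (in the discharge resp. charge direction) at interval `t`, then the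
uniform price equals the marginal bid-in cost: `π t = (fD t)'(gD t)`
(resp. `π t = (fC t)'(gC t)`). -/
theorem uniform_price_eq_marginal_cost_at_marginal_interval
    (T : ℕ) (P : ESRParams) (π : ℕ → ℝ) (fD fC : ℕ → ℝ → ℝ)
    (hfDconv : ∀ t, ConvexOn ℝ Set.univ (fD t))
    (hfDdiff : ∀ t, Differentiable ℝ (fD t))
    (hfCconc : ∀ t, ConcaveOn ℝ Set.univ (fC t))
    (hfCdiff : ∀ t, Differentiable ℝ (fC t))
    (gD gC E : ℕ → ℝ)
    (hfeas : Feasible T P gD gC E)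
    (hopt : ∀ pD pC e, Feasible T P pD pC e →
      profit T π π fD fC pD pC ≤ profit T π π fD fC gD gC)
    (t : ℕ) (ht1 : 1 ≤ t) (htT : t ≤ T) :
    (MarginalD T P gD E t → π t = deriv (fD t) (gD t)) ∧
    (MarginalC T P gC E t → π t = deriv (fC t) (gC t)) :=
  have hmax : IsMaxOn (fun x => profit T π π fD fC x.1 x.2.1) (feasibleSet T P) (gD, gC, E) :=
    fun x hx => hopt x.1 x.2.1 x.2.2 hx
  (uniform_price_eq_marginal_cost_at_marginal_interval_general hfeas hmax.localize
    (Finset.mem_Icc.2 ⟨ht1, htT⟩)).imp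
      (fun h hm => h hm (hfDdiff t _)) fun h hm => h hm (hfCdiff t _)
end

section
/- Let (g^D, g^C, E) ∈ S be the rolling-window dispatch of an ESR, and suppose for every t ∈ {1,…,T} there exist real numbers λ_t (energy price), φ_t (SOC price), Δ^D_t, Δ^C_t (ramping prices), and nonnegative multipliers ρ̄^D_t, ρ̲^D_t, ρ̄^C_t, ρ̲^C_t satisfying the binding-interval stationarity conditions of the stochastic rolling-window dispatch: (f^D_t)'(g^D_t) − λ_t + (1/ξ^D) φ_t − Δ^D_t + ρ̄^D_t − ρ̲^D_t = 0 and −(f^C_t)'(g^C_t) + λ_t − ξ^C φ_t − Δ^C_t + ρ̄^C_t − ρ̲^C_t = 0, together with complementary slackness ρ̄^D_t(ḡ^D − g^D_t) = 0, ρ̲^D_t g^D_t = 0, ρ̄^C_t(ḡ^C − g^C_t) = 0, ρ̲^C_t g^C_t = 0. Define the temporal locational marginal prices π^{TLMP-D}_t = λ_t − (1/ξ^D) φ_t + Δ^D_t and π^{TLMP-C}_t = λ_t − ξ^C φ_t − Δ^C_t. Then the lost opportunity cost of the dispatch under TLMP is zero: profit(π^{TLMP-D}, π^{TLMP-C}; g^D,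 g^C) = Q(π^{TLMP-D}, π^{TLMP-C}) = sup_{(p^D,p^C,e) ∈ S} profit(π^{TLMP-D}, π^{TLMP-C}; p^D, p^C), so LOC(π^{TLMP}) = 0. -/
/-- The set of profits attainable over the feasible set `S`. -/
def profitSet (T : ℕ) (P : ESRParams) (piD piC : ℕ → ℝ)
    (fD fC : ℕ → ℝ → ℝ) : Set ℝ :=
  {x | ∃ pD pC e, Feasible T P pD pC e ∧ x = profit T piD piC fD fC pD pC}

/-- `Q(πD, πC) = sup` of the profit over the feasible set `S`. -/
noncomputable def Qmax (T : ℕ) (P : ESRParams) (piD piC : ℕ → ℝ)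
    (fD fC : ℕ → ℝ → ℝ) : ℝ :=
  sSup (profitSet T P piD piC fD fC)

/-- Lost opportunity cost of a dispatch: `LOC = Q − profit`. -/
noncomputable def LOC (T : ℕ) (P : ESRParams) (piD piC : ℕ → ℝ)
    (fD fC : ℕ → ℝ → ℝ) (pD pC : ℕ → ℝ) : ℝ :=
  Qmax T P piD piC fD fC - profit T piD piC fD fC pD pC

/-!
The `φ` and `Δ` terms of the TLMP absorb every intertemporal dual, so binding-interval stationarity
reads: price equals marginal cost (or benefit) up to the duals of the capacity bounds. These are the
KKT conditions of a one-interval problem, maximizing `πD * p - fD p` or `fC p - πC p` over the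
capacity range. As these objectives are concave, the dispatch maximizes each term of the profit
over the capacity box. The feasible set lies in that box and contains the dispatch, so the dispatch
is optimal on it as well.
-/

section Concave

variable {f : ℝ → ℝ} {f' x : ℝ}

theorem le_add_mul_sub_of_concaveOn {s : Set ℝ} {y : ℝ} (hf : ConcaveOn ℝ s f)
    (hf' : HasDerivWithinAt f f' s x) (hx : x ∈ s) (hy : y ∈ s) :
    f y ≤ f x + f' * (y - x) := by
  rcases lt_trichotomy x y with hxy | rfl | hyx
  · have hslope := hf.slope_le_of_hasDerivWithinAt hx hy hxy hf'
    rw [slope_def_field, div_le_iff₀ (sub_pos.2 hxy)] at hslope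
    linarith
  · simp
  · have hslope := hf.le_slope_of_hasDerivWithinAt hy hx hyx hf'
    rw [slope_def_field, le_div_iff₀ (sub_pos.2 hyx)] at hslope
    linarith

variable {a b u l : ℝ}

theorem isMaxOn_Icc_of_concaveOn_of_kkt (hf : ConcaveOn ℝ (Set.Icc a b) f)
    (hf' : HasDerivWithinAt f f' (Set.Icc a b) x) (hx : x ∈ Set.Icc a b)
    (hu : 0 ≤ u) (hl : 0 ≤ l) (hstat : f' = u - l)
    (hslack_u : u * (b - x) = 0) (hslack_l : l * (x - a) = 0) :
    IsMaxOn f (Set.Icc a b) x := by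
  intro y hy
  have hupper : 0 ≤ u * (b - y) := mul_nonneg hu (sub_nonneg.2 hy.2)
  have hlower : 0 ≤ l * (y - a) := mul_nonneg hl (sub_nonneg.2 hy.1)
  calc
    f y ≤ f x + f' * (y - x) := le_add_mul_sub_of_concaveOn hf hf' hx hy
    _ = f x + (u * (b - x) - u * (b - y)) + (l * (x - a) - l * (y - a)) := by
      rw [hstat]; ring
    _ ≤ f x := by linarith

variable {π : ℝ}

theorem isMaxOn_Icc_mul_sub_of_kkt (hf : ConvexOn ℝ (Set.Icc a b) f)
    (hf' : HasDerivWithinAt f f' (Set.Icc a b) x) (hx : x ∈ Set.Icc a b)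
    (hu : 0 ≤ u) (hl : 0 ≤ l) (hstat : f' - π + u - l = 0)
    (hslack_u : u * (b - x) = 0) (hslack_l : l * (x - a) = 0) :
    IsMaxOn (fun p => π * p - f p) (Set.Icc a b) x :=
  isMaxOn_Icc_of_concaveOn_of_kkt (((LinearMap.mulLeft ℝ π).concaveOn hf.1).sub hf)
    ((hasDerivAt_const_mul π).hasDerivWithinAt.sub hf') hx hu hl (by linarith) hslack_u hslack_l

theorem isMaxOn_Icc_sub_mul_of_kkt (hf : ConcaveOn ℝ (Set.Icc a b) f)
    (hf' : HasDerivWithinAt f f' (Set.Icc a b) x) (hx : x ∈ Set.Icc a b)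
    (hu : 0 ≤ u) (hl : 0 ≤ l) (hstat : -f' + π + u - l = 0)
    (hslack_u : u * (b - x) = 0) (hslack_l : l * (x - a) = 0) :
    IsMaxOn (fun p => f p - π * p) (Set.Icc a b) x :=
  isMaxOn_Icc_of_concaveOn_of_kkt (hf.sub ((LinearMap.mulLeft ℝ π).convexOn hf.1))
    (hf'.sub (hasDerivAt_const_mul π).hasDerivWithinAt) hx hu hl (by linarith) hslack_u hslack_l

end Concave

section Dispatch

variable {T : ℕ} {P : ESRParams} {piD piC : ℕ → ℝ} {fD fC : ℕ → ℝ → ℝ} {pD pC e gD gC E : ℕ → ℝ}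

namespace Feasible

theorem discharge_mem_Icc (h : Feasible T P pD pC e) {t : ℕ} (ht : t ∈ Finset.Icc 1 T) :
    pD t ∈ Set.Icc 0 P.gDmax := by
  obtain ⟨-, -, -, -, -, -, -, hlower, hupper, -, -⟩ := h.2.2.2 t ht
  exact ⟨hlower, hupper⟩

theorem charge_mem_Icc (h : Feasible T P pD pC e) {t : ℕ} (ht : t ∈ Finset.Icc 1 T) :
    pC t ∈ Set.Icc 0 P.gCmax := by
  obtain ⟨-, -, -, -, -, -, -, -, -, hlower, hupper⟩ := h.2.2.2 t ht
  exact ⟨hlower, hupper⟩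

end Feasible

theorem isGreatest_profitSet_of_isMaxOn (hg : Feasible T P gD gC E)
    (hD : ∀ t ∈ Finset.Icc 1 T, IsMaxOn (fun p => piD t * p - fD t p) (Set.Icc 0 P.gDmax) (gD t))
    (hC : ∀ t ∈ Finset.Icc 1 T, IsMaxOn (fun p => fC t p - piC t * p) (Set.Icc 0 P.gCmax) (gC t)) :
    IsGreatest (profitSet T P piD piC fD fC) (profit T piD piC fD fC gD gC) := by
  refine ⟨⟨gD, gC, E, hg, rfl⟩, ?_⟩
  rintro _ ⟨pD, pC, e, hp, rfl⟩
  refine Finset.sum_le_sum fun t ht => ?_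
  have hdischarge : piD t * pD t - fD t (pD t) ≤ piD t * gD t - fD t (gD t) :=
    hD t ht (hp.discharge_mem_Icc ht)
  have hcharge : fC t (pC t) - piC t * pC t ≤ fC t (gC t) - piC t * gC t :=
    hC t ht (hp.charge_mem_Icc ht)
  linarith

theorem LOC_eq_zero_iff :
    LOC T P piD piC fD fC gD gC = 0 ↔
      profit T piD piC fD fC gD gC = Qmax T P piD piC fD fC :=
  sub_eq_zero.trans eq_comm

end Dispatch

theorem tlmp_zero_LOC_general
    (T : ℕ) (P : ESRParams) (fD fC : ℕ → ℝ → ℝ) (gD gC E fD' fC' : ℕ → ℝ)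
    (hfDconv : ∀ t ∈ Finset.Icc 1 T, ConvexOn ℝ (Set.Icc 0 P.gDmax) (fD t))
    (hfDderiv : ∀ t ∈ Finset.Icc 1 T,
      HasDerivWithinAt (fD t) (fD' t) (Set.Icc 0 P.gDmax) (gD t))
    (hfCconc : ∀ t ∈ Finset.Icc 1 T, ConcaveOn ℝ (Set.Icc 0 P.gCmax) (fC t))
    (hfCderiv : ∀ t ∈ Finset.Icc 1 T,
      HasDerivWithinAt (fC t) (fC' t) (Set.Icc 0 P.gCmax) (gC t))
    (hfeas : Feasible T P gD gC E)
    (lam φ ΔD ΔC ρDu ρDl ρCu ρCl : ℕ → ℝ)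
    (hρDu : ∀ t, 0 ≤ ρDu t) (hρDl : ∀ t, 0 ≤ ρDl t)
    (hρCu : ∀ t, 0 ≤ ρCu t) (hρCl : ∀ t, 0 ≤ ρCl t)
    (hstD : ∀ t ∈ Finset.Icc 1 T,
      fD' t - lam t + φ t / P.xiD - ΔD t + ρDu t - ρDl t = 0)
    (hstC : ∀ t ∈ Finset.Icc 1 T,
      -fC' t + lam t - P.xiC * φ t - ΔC t + ρCu t - ρCl t = 0)
    (hcsDu : ∀ t ∈ Finset.Icc 1 T, ρDu t * (P.gDmax - gD t) = 0)
    (hcsDl : ∀ t ∈ Finset.Icc 1 T, ρDl t * gD t = 0)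
    (hcsCu : ∀ t ∈ Finset.Icc 1 T, ρCu t * (P.gCmax - gC t) = 0)
    (hcsCl : ∀ t ∈ Finset.Icc 1 T, ρCl t * gC t = 0)
    (piD piC : ℕ → ℝ)
    (hpiD : ∀ t, piD t = lam t - φ t / P.xiD + ΔD t)
    (hpiC : ∀ t, piC t = lam t - P.xiC * φ t - ΔC t) :
    profit T piD piC fD fC gD gC = Qmax T P piD piC fD fC ∧
    LOC T P piD piC fD fC gD gC = 0 := by
  have hD : ∀ t ∈ Finset.Icc 1 T,
      IsMaxOn (fun p => piD t * p - fD t p) (Set.Icc 0 P.gDmax) (gD t) := fun t ht =>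
    isMaxOn_Icc_mul_sub_of_kkt (hfDconv t ht) (hfDderiv t ht) (hfeas.discharge_mem_Icc ht)
      (hρDu t) (hρDl t) (by linarith [hstD t ht, hpiD t])
      (hcsDu t ht) (by rw [sub_zero, hcsDl t ht])
  have hC : ∀ t ∈ Finset.Icc 1 T,
      IsMaxOn (fun p => fC t p - piC t * p) (Set.Icc 0 P.gCmax) (gC t) := fun t ht =>
    isMaxOn_Icc_sub_mul_of_kkt (hfCconc t ht) (hfCderiv t ht) (hfeas.charge_mem_Icc ht)
      (hρCu t) (hρCl t) (by linarith [hstC t ht, hpiC t])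
      (hcsCu t ht) (by rw [sub_zero, hcsCl t ht])
  have hprofit : profit T piD piC fD fC gD gC = Qmax T P piD piC fD fC :=
    (isGreatest_profitSet_of_isMaxOn hfeas hD hC).csSup_eq.symm
  exact ⟨hprofit, LOC_eq_zero_iff.2 hprofit⟩

/-!
STATEMENT 7 (Theorem 2 of the paper: dispatch-following incentive
compatibility of TLMP).

The rolling-window dispatch `(gD, gC, E) ∈ S` satisfies, in every binding
interval `t`, the KKT stationarity conditions of the stochastic
rolling-window dispatch, in which `lam t` is the dual of the power balance
constraint (LMP), `φ t` the dual of the SOC transition equation,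
`ΔD t, ΔC t` the net ramping dual differences, and `ρ…` the nonnegative
capacity-bound duals with complementary slackness.  Under the TLMP prices
`πD t = λ t − φ t / ξ^D + ΔD t`, `πC t = λ t − ξ^C φ t − ΔC t`, the dispatch
attains the maximum individual profit, so its lost opportunity cost is
zero. -/
theorem tlmp_zero_LOC
    (T : ℕ) (P : ESRParams) (fD fC : ℕ → ℝ → ℝ)
    (hfDconv : ∀ t, ConvexOn ℝ Set.univ (fD t))
    (hfDdiff : ∀ t, Differentiable ℝ (fD t))
    (hfCconc : ∀ t, ConcaveOn ℝ Set.univ (fC t))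
    (hfCdiff : ∀ t, Differentiable ℝ (fC t))
    (gD gC E : ℕ → ℝ)
    (hfeas : Feasible T P gD gC E)
    -- energy price, SOC price, ramping prices
    (lam φ ΔD ΔC : ℕ → ℝ)
    -- capacity-bound multipliers
    (ρDu ρDl ρCu ρCl : ℕ → ℝ)
    (hρDu : ∀ t, 0 ≤ ρDu t) (hρDl : ∀ t, 0 ≤ ρDl t)
    (hρCu : ∀ t, 0 ≤ ρCu t) (hρCl : ∀ t, 0 ≤ ρCl t)
    -- binding-interval stationarity conditions
    (hstD : ∀ t ∈ Finset.Icc 1 T,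
      deriv (fD t) (gD t) - lam t + φ t / P.xiD - ΔD t + ρDu t - ρDl t = 0)
    (hstC : ∀ t ∈ Finset.Icc 1 T,
      -deriv (fC t) (gC t) + lam t - P.xiC * φ t - ΔC t + ρCu t - ρCl t = 0)
    -- complementary slackness
    (hcsDu : ∀ t ∈ Finset.Icc 1 T, ρDu t * (P.gDmax - gD t) = 0)
    (hcsDl : ∀ t ∈ Finset.Icc 1 T, ρDl t * gD t = 0)
    (hcsCu : ∀ t ∈ Finset.Icc 1 T, ρCu t * (P.gCmax - gC t) = 0)
    (hcsCl : ∀ t ∈ Finset.Icc 1 T, ρCl t * gC t = 0)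
    -- the temporal locational marginal prices
    (piD piC : ℕ → ℝ)
    (hpiD : ∀ t, piD t = lam t - φ t / P.xiD + ΔD t)
    (hpiC : ∀ t, piC t = lam t - P.xiC * φ t - ΔC t) :
    profit T piD piC fD fC gD gC = Qmax T P piD piC fD fC ∧
    LOC T P piD piC fD fC gD gC = 0 :=
  tlmp_zero_LOC_general T P fD fC gD gC E _ _
    (fun t _ => (hfDconv t).subset (Set.subset_univ _) (convex_Icc _ _))
    (fun t _ => (hfDdiff t (gD t)).hasDerivAt.hasDerivWithinAt)
    (fun t _ => (hfCconc t).subset (Set.subset_univ _) (convex_Icc _ _))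
    (fun t _ => (hfCdiff t (gC t)).hasDerivAt.hasDerivWithinAt)
    hfeas lam φ ΔD ΔC ρDu ρDl ρCu ρCl hρDu hρDl hρCu hρCl hstD hstC hcsDu hcsDl hcsCu hcsCl
    piD piC hpiD hpiC
end

section
/- Fix discharge and charge price sequences π^D, π^C ∈ ℝ^T (the price-taking assumption: these TLMP prices do not depend on the ESR's bid). Let q^D_t : ℝ → ℝ be the true convex differentiable discharge cost curves and q^C_t : ℝ → ℝ the true concave differentiable charging benefit curves, and let S* be the truthful feasible set defined by the ESR's true ramp limits, SOC limits, capacity limits, efficiencies and initial conditions. Suppose the dispatch (g^{D*}, g^{C*}, E^*) ∈ S* obtained under truthful bidding satisfies, with the true curves q^D, q^C, the KKT conditions: for every t there exist nonnegative multipliers ρ̄^D_t, ρ̲^D_t, ρ̄^C_t, ρ̲^C_t with complementary slackness ρ̄^D_t(ḡ^D − g^{D*}_t) = 0, ρ̲^D_t g^{D*}_t = 0, ρ̄^C_t(ḡ^C − g^{C*}_t) = 0, ρ̲^C_t g^{C*}_t = 0 and stationarity (q^D_t)'(g^{D*}_t) − π^D_t + ρ̄^D_t − ρ̲^D_t = 0,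 −(q^C_t)'(g^{C*}_t) + π^C_t + ρ̄^C_t − ρ̲^C_t = 0. Then for every alternative dispatch (g^D, g^C, E) ∈ S* (in particular the dispatch induced by any untruthful bidding parameter θ, which the ESR expects to lie in its truthful feasible region), the true price-taking profit satisfies Σ_{t=1}^T (π^D_t g^D_t − π^C_t g^C_t − q^D_t(g^D_t) + q^C_t(g^C_t)) ≤ Σ_{t=1}^T (π^D_t g^{D*}_t − π^C_t g^{C*}_t − q^D_t(g^{D*}_t) + q^C_t(g^{C*}_t)); i.e., under TLMP it is optimal for a price-taking ESR to bid truthfully. -/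
/-!
With the prices fixed, profit is separable over intervals and over discharge and charge, and
charging at price `πC` with benefit `qC` is discharging at price `-πC` with cost `-qC`. So
everything reduces to maximizing `π * y - f y`, with `f` convex, over a capacity interval. The graph
of `f` lies above its tangent at the KKT point `x`, and the multipliers give that the tangent
of `f y - π * y` at `x` does not decrease from `x` towards any point of the interval.
-/

section KKT

variable {f : ℝ → ℝ} {K : Set ℝ} {f' π a b d x y : ℝ}

theorem add_mul_sub_le_of_convexOn_of_hasDerivWithinAt (hf : ConvexOn ℝ K f) (hx : x ∈ K)
    (hy : y ∈ K) (hf' : HasDerivWithinAt f f' K x) : f x + f' * (y - x) ≤ f y := by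
  rcases lt_trichotomy x y with hxy | rfl | hyx
  · have hslope := hf.le_slope_of_hasDerivWithinAt hx hy hxy hf'
    rw [slope_def_field, le_div_iff₀ (sub_pos.2 hxy)] at hslope
    linarith
  · simp
  · have hslope := hf.slope_le_of_hasDerivWithinAt hy hx hyx hf'
    rw [slope_def_field, div_le_iff₀ (sub_pos.2 hyx)] at hslope
    linarith

/-- The KKT conditions at `x` for minimizing over the interval `[a, b]` a function whose derivative
at `x` is `d`, with `u` and `l` the multipliers of the upper and lower bound. Primal feasibility
`x ∈ [a, b]` is not part of the definition. -/
def IsKKTPoint (a b d x : ℝ) : Prop :=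
  ∃ u l : ℝ, 0 ≤ u ∧ 0 ≤ l ∧ u * (b - x) = 0 ∧ l * (x - a) = 0 ∧ d + u - l = 0

theorem IsKKTPoint.mul_sub_nonneg (h : IsKKTPoint a b d x) (hy : y ∈ Set.Icc a b) :
    0 ≤ d * (y - x) := by
  obtain ⟨u, l, hu, hl, hslack_u, hslack_l, hstat⟩ := h
  calc
    0 ≤ l * (y - a) + u * (b - y) :=
      add_nonneg (mul_nonneg hl (sub_nonneg.2 hy.1)) (mul_nonneg hu (sub_nonneg.2 hy.2))
    _ = d * (y - x) := by linear_combination hslack_l + hslack_u - (y - x) * hstat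

theorem IsKKTPoint.isMaxOn_mul_sub (h : IsKKTPoint a b (f' - π) x) (hf : ConvexOn ℝ K f)
    (hx : x ∈ K) (hf' : HasDerivWithinAt f f' K x) :
    IsMaxOn (fun y ↦ π * y - f y) (K ∩ Set.Icc a b) x := by
  rintro y ⟨hyK, hy⟩
  have htangent := add_mul_sub_le_of_convexOn_of_hasDerivWithinAt hf hx hyK hf'
  have hvariational := h.mul_sub_nonneg hy
  change π * y - f y ≤ π * x - f x
  linarith

end KKT

section Feasible

variable {T : ℕ} {P : ESRParams} {pD pC e : ℕ → ℝ} {t : ℕ}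

theorem Feasible.discharge_mem_Icc_s8 (h : Feasible T P pD pC e) (ht : t ∈ Finset.Icc 1 T) :
    pD t ∈ Set.Icc 0 P.gDmax := by
  obtain ⟨-, -, -, hinterval⟩ := h
  obtain ⟨-, -, -, -, -, -, -, hmin, hmax, -, -⟩ := hinterval t ht
  exact ⟨hmin, hmax⟩

theorem Feasible.charge_mem_Icc_s8 (h : Feasible T P pD pC e) (ht : t ∈ Finset.Icc 1 T) :
    pC t ∈ Set.Icc 0 P.gCmax := by
  obtain ⟨-, -, -, hinterval⟩ := h
  obtain ⟨-, -, -, -, -, -, -, -, -, hmin, hmax⟩ := hinterval t ht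
  exact ⟨hmin, hmax⟩

end Feasible

theorem tlmp_truthful_bidding_optimal_general {ι : Type*} {I : Finset ι}
    {piD piC : ι → ℝ} {qD qC : ι → ℝ → ℝ} {KD KC : ι → Set ℝ}
    (hqDconv : ∀ t ∈ I, ConvexOn ℝ (KD t) (qD t))
    (hqCconc : ∀ t ∈ I, ConcaveOn ℝ (KC t) (qC t))
    {gDstar gCstar qD' qC' : ι → ℝ}
    (hgDstar : ∀ t ∈ I, gDstar t ∈ KD t) (hgCstar : ∀ t ∈ I, gCstar t ∈ KC t)
    (hqD' : ∀ t ∈ I, HasDerivWithinAt (qD t) (qD' t) (KD t) (gDstar t))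
    (hqC' : ∀ t ∈ I, HasDerivWithinAt (qC t) (qC' t) (KC t) (gCstar t))
    {gDmin gDmax gCmin gCmax : ι → ℝ}
    (hkktD : ∀ t ∈ I, IsKKTPoint (gDmin t) (gDmax t) (qD' t - piD t) (gDstar t))
    (hkktC : ∀ t ∈ I, IsKKTPoint (gCmin t) (gCmax t) (-qC' t + piC t) (gCstar t))
    {gD gC : ι → ℝ}
    (hgD : ∀ t ∈ I, gD t ∈ KD t ∩ Set.Icc (gDmin t) (gDmax t))
    (hgC : ∀ t ∈ I, gC t ∈ KC t ∩ Set.Icc (gCmin t) (gCmax t)) :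
    ∑ t ∈ I, (piD t * gD t - piC t * gC t - qD t (gD t) + qC t (gC t)) ≤
      ∑ t ∈ I, (piD t * gDstar t - piC t * gCstar t - qD t (gDstar t) + qC t (gCstar t)) := by
  refine Finset.sum_le_sum fun t ht ↦ ?_
  have hdischarge : piD t * gD t - qD t (gD t) ≤ piD t * gDstar t - qD t (gDstar t) :=
    (hkktD t ht).isMaxOn_mul_sub (hqDconv t ht) (hgDstar t ht) (hqD' t ht) (hgD t ht)
  have hkktC_neg : IsKKTPoint (gCmin t) (gCmax t) (-qC' t - -piC t) (gCstar t) := by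
    simpa only [sub_neg_eq_add] using hkktC t ht
  have hcharge : -piC t * gC t - -qC t (gC t) ≤ -piC t * gCstar t - -qC t (gCstar t) :=
    hkktC_neg.isMaxOn_mul_sub (hqCconc t ht).neg (hgCstar t ht) (hqC' t ht).neg (hgC t ht)
  linarith

/-!
STATEMENT 8 (Theorem 3 of the paper: truthful-bidding incentive
compatibility of TLMP).

Fixed TLMP discharge/charge prices `piD, piC` (price-taking assumption:
they do not depend on the ESR's bid); `qD, qC` are the true discharge cost
and charging benefit curves, and `Feasible T P` is the ESR's truthful
feasible set `S*`.  If the dispatch `(gDstar, gCstar, Estar) ∈ S*` obtained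
under truthful bidding satisfies the KKT conditions with the true curves,
then its true price-taking profit dominates the profit of the dispatch
induced by any (possibly untruthful) bid, which the ESR expects to lie in
its truthful feasible region: truthful bidding is optimal. -/
theorem tlmp_truthful_bidding_optimal
    (T : ℕ) (P : ESRParams) (piD piC : ℕ → ℝ) (qD qC : ℕ → ℝ → ℝ)
    (hqDconv : ∀ t, ConvexOn ℝ Set.univ (qD t))
    (hqDdiff : ∀ t, Differentiable ℝ (qD t))
    (hqCconc : ∀ t, ConcaveOn ℝ Set.univ (qC t))
    (hqCdiff : ∀ t, Differentiable ℝ (qC t))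
    -- the dispatch obtained under truthful bidding
    (gDstar gCstar Estar : ℕ → ℝ)
    (hfeas : Feasible T P gDstar gCstar Estar)
    -- capacity-bound multipliers
    (ρDu ρDl ρCu ρCl : ℕ → ℝ)
    (hρDu : ∀ t, 0 ≤ ρDu t) (hρDl : ∀ t, 0 ≤ ρDl t)
    (hρCu : ∀ t, 0 ≤ ρCu t) (hρCl : ∀ t, 0 ≤ ρCl t)
    -- complementary slackness
    (hcsDu : ∀ t ∈ Finset.Icc 1 T, ρDu t * (P.gDmax - gDstar t) = 0)
    (hcsDl : ∀ t ∈ Finset.Icc 1 T, ρDl t * gDstar t = 0)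
    (hcsCu : ∀ t ∈ Finset.Icc 1 T, ρCu t * (P.gCmax - gCstar t) = 0)
    (hcsCl : ∀ t ∈ Finset.Icc 1 T, ρCl t * gCstar t = 0)
    -- stationarity with the true curves
    (hstD : ∀ t ∈ Finset.Icc 1 T,
      deriv (qD t) (gDstar t) - piD t + ρDu t - ρDl t = 0)
    (hstC : ∀ t ∈ Finset.Icc 1 T,
      -deriv (qC t) (gCstar t) + piC t + ρCu t - ρCl t = 0) :
    -- any alternative dispatch in the truthful feasible region (in
    -- particular the dispatch induced by any untruthful bid θ) yields no
    -- larger true price-taking profit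
    ∀ gD gC E : ℕ → ℝ, Feasible T P gD gC E →
      ∑ t ∈ Finset.Icc 1 T,
          (piD t * gD t - piC t * gC t - qD t (gD t) + qC t (gC t)) ≤
      ∑ t ∈ Finset.Icc 1 T,
          (piD t * gDstar t - piC t * gCstar t
            - qD t (gDstar t) + qC t (gCstar t)) := by
  intro gD gC E hE
  have hkktD : ∀ t ∈ Finset.Icc 1 T,
      IsKKTPoint 0 P.gDmax (deriv (qD t) (gDstar t) - piD t) (gDstar t) := fun t ht ↦
    ⟨ρDu t, ρDl t, hρDu t, hρDl t, hcsDu t ht,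
      by simpa only [sub_zero] using hcsDl t ht, hstD t ht⟩
  have hkktC : ∀ t ∈ Finset.Icc 1 T,
      IsKKTPoint 0 P.gCmax (-deriv (qC t) (gCstar t) + piC t) (gCstar t) := fun t ht ↦
    ⟨ρCu t, ρCl t, hρCu t, hρCl t, hcsCu t ht,
      by simpa only [sub_zero] using hcsCl t ht, hstC t ht⟩
  exact tlmp_truthful_bidding_optimal_general
    (fun t _ ↦ hqDconv t) (fun t _ ↦ hqCconc t)
    (fun _ _ ↦ Set.mem_univ _) (fun _ _ ↦ Set.mem_univ _)
    (fun t _ ↦ (hqDdiff t (gDstar t)).hasDerivAt.hasDerivWithinAt)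
    (fun t _ ↦ (hqCdiff t (gCstar t)).hasDerivAt.hasDerivWithinAt)
    hkktD hkktC
    (fun _ ht ↦ ⟨Set.mem_univ _, hE.discharge_mem_Icc_s8 ht⟩)
    (fun _ ht ↦ ⟨Set.mem_univ _, hE.charge_mem_Icc_s8 ht⟩)
end
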